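/- Let s_n = |SEP(n)|. For every real t with |t| < 3 − 2√2, the series ∑_{n=1}^∞ s_n t^n converges and ∑_{n=1}^∞ s_n t^n = (1/2)(1 − t − √(t² − 6t + 1)). -/

import Mathlib

open Finset Filter Real
open scoped Classical

/-- `σ` contains the pattern `τ` (a permutation of `Fin k` given as a function). -/
def ContainsPattern {n k : ℕ} (σ : Equiv.Perm (Fin n)) (τ : Fin k → Fin k) : Prop :=
  ∃ f : Fin k → Fin n, StrictMono f ∧ ∀ a b : Fin k, τ a < τ b ↔ σ (f a) < σ (f b)

/-- A permutation is separable iff it avoids the patterns 2413 and 3142. -/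
def Separable {n : ℕ} (σ : Equiv.Perm (Fin n)) : Prop :=
  ¬ ContainsPattern σ (![1, 3, 0, 2] : Fin 4 → Fin 4) ∧
  ¬ ContainsPattern σ (![2, 0, 3, 1] : Fin 4 → Fin 4)

/-- The set of separable permutations of `[n]`. -/
noncomputable def SEP (n : ℕ) : Finset (Equiv.Perm (Fin n)) :=
  Finset.univ.filter fun σ => Separable σ

/-- `IsAltSeq σ s l` : `l` is a strictly increasing list of indices along which the values of `σ`
alternate, starting with an ascent if `s = true` and starting with a descent if `s = false`. -/
def IsAltSeq {n : ℕ} (σ : Equiv.Perm (Fin n)) (s : Bool) (l : List (Fin n)) : Prop :=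
  l.Chain' (· < ·) ∧
  ∀ j : ℕ, ∀ hj : j + 1 < l.length,
    if decide (j % 2 = 0) = s then
      σ (l.get ⟨j, Nat.lt_of_succ_lt hj⟩) < σ (l.get ⟨j + 1, hj⟩)
    else
      σ (l.get ⟨j + 1, hj⟩) < σ (l.get ⟨j, Nat.lt_of_succ_lt hj⟩)

/-- The length of the longest alternating subsequence of `σ` of type `(s, e)`, where
`true` stands for ascent and `false` for descent.  An alternating subsequence starting with
an ascent ends with a descent iff its length is odd (and similarly in the other cases), so the
type is encoded by the parity constraint; a singleton counts as a subsequence of types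
`(+,-)` and `(-,+)` but not of types `(+,+)` and `(-,-)`. -/
noncomputable def altTypeLen {n : ℕ} (σ : Equiv.Perm (Fin n)) (s e : Bool) : ℕ :=
  sSup {k | ∃ l : List (Fin n), IsAltSeq σ s l ∧ l.length = k ∧
    k % 2 = (if s = e then 0 else 1)}

/-- The length `Aₙ(σ)` of the longest alternating subsequence of `σ`. -/
noncomputable def altLen {n : ℕ} (σ : Equiv.Perm (Fin n)) : ℕ :=
  sSup {k | ∃ l : List (Fin n), (IsAltSeq σ true l ∨ IsAltSeq σ false l) ∧
    l.length = k ∧ 1 ≤ k}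

/-- Expectation with respect to the uniform probability measure on `SEP n`. -/
noncomputable def sepExp (n : ℕ) (f : Equiv.Perm (Fin n) → ℝ) : ℝ :=
  (∑ σ ∈ SEP n, f σ) / (SEP n).card

/-- Variance with respect to the uniform probability measure on `SEP n`. -/
noncomputable def sepVar (n : ℕ) (f : Equiv.Perm (Fin n) → ℝ) : ℝ :=
  sepExp n (fun σ => (f σ - sepExp n f) ^ 2)

/-- `B₁^{+,n}(σ)`: the length of the first indecomposable block (0-indexed positions). -/
noncomputable def Bplus {n : ℕ} (σ : Equiv.Perm (Fin n)) : ℕ :=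
  sInf {j | 1 ≤ j ∧ ∀ i : Fin n, (i : ℕ) < j → (σ i : ℕ) < j}

/-- `B₁^{-,n}(σ)`: the length of the first skew indecomposable block (0-indexed positions). -/
noncomputable def Bminus {n : ℕ} (σ : Equiv.Perm (Fin n)) : ℕ :=
  sInf {j | 1 ≤ j ∧ ∀ i : Fin n, (i : ℕ) < j → n - j ≤ (σ i : ℕ)}

/-- Expectation over indecomposable separable permutations of `[n]`, i.e. the conditional
expectation under the uniform measure on `SEP n` given `{B₁^{+,n} = n}`. -/
noncomputable def indecExp (n : ℕ) (f : Equiv.Perm (Fin n) → ℝ) : ℝ :=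
  (∑ σ ∈ (SEP n).filter (fun σ => Bplus σ = n), f σ) /
    ((SEP n).filter (fun σ => Bplus σ = n)).card

/-!
Induction on the length, removing the last term, shows that a separable permutation of length at
least two is a direct sum or a skew sum. It is never both, and complementing the values exchanges
the two cases, so exactly half of these permutations are indecomposable. Splitting off the first
indecomposable block therefore turns `SEP (n + 1)` into a family counted by the recurrence of the
large Schröder numbers.

The generating function `s` satisfies `s = t + t * s + s ^ 2`. By induction on the recurrence, the
partial sums at `r = |t|` stay below any `x ≥ 0` with `r + r * x + x ^ 2 ≤ x`. The choice
`x = (1 - r) / 2` is admissible up to `r = 3 - 2 * √2`: it gives absolute convergence and places `s`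
below the midpoint of the two roots of the quadratic equation, so that `s` is the smaller root.
-/

open Function OrderDual

section Patterns

variable {k n : ℕ} {ι κ α β : Type*} [Preorder ι] [Preorder κ] [Preorder α]
  [LinearOrder β]

/-- The sequence `f` contains the pattern `τ`: this is `ContainsPattern` for sequences with values
in an arbitrary order, so that it can be restricted to subsequences. -/
def HasPattern (f : ι → α) (τ : Fin k → Fin k) : Prop :=
  ∃ g : Fin k → ι, StrictMono g ∧ ∀ a b, τ a < τ b ↔ f (g a) < f (g b)

/-- The sequence `f` avoids the patterns 2413 and 3142. -/
def SeparableSeq (f : ι → α) : Prop :=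
  ¬ HasPattern f (![1, 3, 0, 2] : Fin 4 → Fin 4) ∧ ¬ HasPattern f (![2, 0, 3, 1] : Fin 4 → Fin 4)

lemma separable_iff_separableSeq (σ : Equiv.Perm (Fin n)) : Separable σ ↔ SeparableSeq σ := Iff.rfl

lemma HasPattern.of_comp {f : ι → α} {τ : Fin k → Fin k} {g : κ → ι} (hg : StrictMono g) :
    HasPattern (f ∘ g) τ → HasPattern f τ
  | ⟨e, he, hτ⟩ => ⟨g ∘ e, hg.comp he, hτ⟩

lemma hasPattern_strictMono_comp_iff {e : β → α} (he : StrictMono e) {f : ι → β}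
    {τ : Fin k → Fin k} : HasPattern (e ∘ f) τ ↔ HasPattern f τ := by
  simp only [HasPattern, comp_apply, he.lt_iff_lt]

lemma hasPattern_toDual_comp_iff {f : ι → α} {τ : Fin k → Fin k} :
    HasPattern (toDual ∘ f) τ ↔ HasPattern f (Fin.rev ∘ τ) := by
  simp only [HasPattern, comp_apply, toDual_lt_toDual, Fin.rev_lt_rev]
  exact exists_congr fun _ => and_congr_right fun _ => forall_comm

lemma hasPattern_3142 {f : ι → α} {a b c d : ι} (hab : a < b) (hbc : b < c) (hcd : c < d)
    (hfbd : f b < f d) (hfda : f d < f a) (hfac : f a < f c) :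
    HasPattern f (![2, 0, 3, 1] : Fin 4 → Fin 4) := by
  have hvalues : StrictMono ![f b, f d, f a, f c] := by simp [*]
  refine ⟨![a, b, c, d], by simp [*], fun i j => ?_⟩
  have hf (i : Fin 4) : f (![a, b, c, d] i) = ![f b, f d, f a, f c] (![2, 0, 3, 1] i) := by
    fin_cases i <;> rfl
  rw [hf, hf, hvalues.lt_iff_lt]

lemma SeparableSeq.comp {f : ι → α} (hf : SeparableSeq f) {g : κ → ι} (hg : StrictMono g) :
    SeparableSeq (f ∘ g) :=
  hf.imp (mt (.of_comp hg)) (mt (.of_comp hg))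

lemma separableSeq_strictMono_comp_iff {e : β → α} (he : StrictMono e) {f : ι → β} :
    SeparableSeq (e ∘ f) ↔ SeparableSeq f := by
  simp only [SeparableSeq, hasPattern_strictMono_comp_iff he]

lemma separableSeq_toDual_comp_iff {f : ι → α} : SeparableSeq (toDual ∘ f) ↔ SeparableSeq f := by
  have h2413 : Fin.rev ∘ (![1, 3, 0, 2] : Fin 4 → Fin 4) = ![2, 0, 3, 1] := by decide
  have h3142 : Fin.rev ∘ (![2, 0, 3, 1] : Fin 4 → Fin 4) = ![1, 3, 0, 2] := by decide
  rw [SeparableSeq, hasPattern_toDual_comp_iff, hasPattern_toDual_comp_iff, h2413, h3142, and_comm,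
    SeparableSeq]

end Patterns

section Splitting

variable {k l m n : ℕ} {α β : Type*} [Preorder α] [LinearOrder β]

/-- The terms of `f` at positions before `k` lie below all the later ones. -/
def SplitsAt (f : Fin n → α) (k : ℕ) : Prop :=
  ∀ i j : Fin n, (i : ℕ) < k → k ≤ j → f i < f j

/-- The sequence `f` is a direct sum: it can be cut into two nonempty parts, the first of which lies
below the second. The dual notion of a skew sum is encoded as `SumDecomposable (toDual ∘ f)`. -/
def SumDecomposable (f : Fin n → α) : Prop :=
  ∃ k, 0 < k ∧ k < n ∧ SplitsAt f k

lemma splitsAt_of_length_le (f : Fin n → α) (hk : n ≤ k) : SplitsAt f k :=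
  fun _ j _ hj => absurd (hk.trans hj) j.2.not_ge

lemma splitsAt_strictMono_comp_iff {e : β → α} (he : StrictMono e) {f : Fin n → β} :
    SplitsAt (e ∘ f) k ↔ SplitsAt f k := by
  simp only [SplitsAt, comp_apply, he.lt_iff_lt]

lemma sumDecomposable_strictMono_comp_iff {e : β → α} (he : StrictMono e) {f : Fin n → β} :
    SumDecomposable (e ∘ f) ↔ SumDecomposable f := by
  simp only [SumDecomposable, splitsAt_strictMono_comp_iff he]

lemma splitsAt_succ_iff {f : Fin (n + 1) → α} (hk : k ≤ n) :
    SplitsAt f k ↔ SplitsAt (f ∘ Fin.castSucc) k ∧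
      ∀ i : Fin n, (i : ℕ) < k → f i.castSucc < f (Fin.last n) := by
  simp only [SplitsAt, Fin.forall_fin_succ', comp_apply, Fin.val_castSucc, Fin.val_last, hk,
    hk.not_gt, true_imp_iff, false_imp_iff, implies_true, and_true, forall_and]

/-- This is where avoiding 3142 enters. Either the new last term lies above the lower part of the
given cut, or one cuts just before the first term that exceeds it. -/
lemma SumDecomposable.of_castSucc {f : Fin (n + 1) → β} (hf : Injective f)
    (h3142 : ¬ HasPattern f (![2, 0, 3, 1] : Fin 4 → Fin 4))
    (h : SumDecomposable (f ∘ Fin.castSucc)) :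
    SumDecomposable f ∨ SumDecomposable (toDual ∘ f) := by
  obtain ⟨k, hk0, hkn, hk⟩ := h
  set last := Fin.last n
  have hne (i : Fin n) : f i.castSucc ≠ f last := hf.ne (Fin.castSucc_ne_last i)
  by_cases hlow : ∀ i : Fin n, (i : ℕ) < k → f i.castSucc < f last
  · exact .inl ⟨k, hk0, by lia, (splitsAt_succ_iff hkn.le).2 ⟨hk, hlow⟩⟩
  push Not at hlow
  obtain ⟨q, hqk, hq⟩ := hlow
  obtain ⟨p, hp, hpmin⟩ := WellFounded.has_min wellFounded_lt {i : Fin n | f last < f i.castSucc}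
    ⟨q, hq.lt_of_ne' (hne q)⟩
  have hpk : (p : ℕ) < k := (Fin.le_def.1 (not_lt.1 (hpmin q (hq.lt_of_ne' (hne q))))).trans_lt hqk
  have hbefore (i : Fin n) (hi : i < p) : f i.castSucc < f last :=
    (not_lt.1 fun h => hpmin i h hi).lt_of_ne (hne i)
  have hafter (j : Fin n) (hj : p ≤ j) : f last < f j.castSucc := by
    rcases lt_or_ge (j : ℕ) k with hjk | hjk
    · by_contra! hjlast
      have hpj : p < j := hj.lt_of_ne (by rintro rfl; exact hjlast.not_gt hp)
      exact h3142 (hasPattern_3142 (c := Fin.castSucc ⟨k, hkn⟩) hpj hjk (Fin.castSucc_lt_last _)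
        (hjlast.lt_of_ne (hne j)) hp (hk p ⟨k, hkn⟩ hpk le_rfl))
    · exact lt_trans hp (hk p j hpk hjk)
  rcases (p : ℕ).eq_zero_or_pos with hp0 | hp0
  · exact .inr ⟨n, by lia, by lia, (splitsAt_succ_iff le_rfl).2
      ⟨splitsAt_of_length_le _ le_rfl, fun i _ => hafter i (Fin.le_def.2 (by lia))⟩⟩
  · exact .inl ⟨p, hp0, by lia, (splitsAt_succ_iff p.2.le).2
      ⟨fun i j hi hj => (hbefore i hi).trans (hafter j hj), hbefore⟩⟩

lemma sumDecomposable_of_lt {f : Fin 2 → α} (h : f 0 < f 1) : SumDecomposable f :=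
  ⟨1, one_pos, one_lt_two, by simpa [SplitsAt, Fin.forall_fin_two]⟩

theorem SeparableSeq.sumDecomposable_or (hn : 2 ≤ n) {f : Fin n → β} (hf : Injective f)
    (hsep : SeparableSeq f) : SumDecomposable f ∨ SumDecomposable (toDual ∘ f) := by
  induction n, hn using Nat.le_induction with
  | base =>
    exact (hf.ne zero_ne_one).lt_or_gt.imp sumDecomposable_of_lt
      (sumDecomposable_of_lt (f := toDual ∘ f))
  | succ n _ ih =>
    rcases ih (hf.comp (Fin.castSucc_injective n)) (hsep.comp Fin.strictMono_castSucc) with h | h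
    · exact h.of_castSucc hf hsep.2
    · exact (SumDecomposable.of_castSucc (f := toDual ∘ f) (toDual.injective.comp hf)
        (separableSeq_toDual_comp_iff.2 hsep).2 h).symm

lemma SumDecomposable.not_toDual_comp {f : Fin n → α} :
    SumDecomposable f → ¬ SumDecomposable (toDual ∘ f) := by
  rintro ⟨k, hk0, hkn, hk⟩ ⟨l, hl0, hln, hl⟩
  let first : Fin n := ⟨0, by lia⟩
  let last : Fin n := ⟨n - 1, by lia⟩
  exact (hk first last hk0 (Nat.le_sub_one_of_lt hkn)).asymm
    (hl first last hl0 (Nat.le_sub_one_of_lt hln))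

lemma hasPattern_comp_of_mem_range {f : Fin n → α} {τ : Fin l → Fin l} {g : Fin l → Fin n}
    (hg : StrictMono g) (hτ : ∀ a b, τ a < τ b ↔ f (g a) < f (g b)) (e : Fin m ↪o Fin n)
    (he : ∀ a, g a ∈ Set.range e) : HasPattern (f ∘ e) τ := by
  choose g' hg' using he
  obtain rfl : e ∘ g' = g := funext hg'
  exact ⟨g', fun a b hab => e.lt_iff_lt.1 (hg hab), hτ⟩

lemma SplitsAt.hasPattern_iff {f : Fin (k + m) → α} (hf : SplitsAt f k) {τ : Fin l → Fin l}
    (hτ : ¬ SumDecomposable τ) :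
    HasPattern f τ ↔ HasPattern (f ∘ Fin.castAdd m) τ ∨ HasPattern (f ∘ Fin.natAdd k) τ := by
  refine ⟨fun ⟨g, hg, h⟩ => ?_,
    Or.rec (.of_comp (Fin.strictMono_castAdd m)) (.of_comp (Fin.strictMono_natAdd k))⟩
  by_cases hleft : ∀ a, (g a : ℕ) < k
  · exact .inl <| hasPattern_comp_of_mem_range hg h (Fin.castAddOrderEmb m) fun a =>
      ⟨(g a).castLT (hleft a), rfl⟩
  by_cases hright : ∀ a, k ≤ (g a : ℕ)
  · exact .inr <| hasPattern_comp_of_mem_range hg h (Fin.natAddOrderEmb k) fun a =>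
      (Fin.range_natAdd k m).ge (hright a)
  push Not at hleft hright
  obtain ⟨c, hc, hcmin⟩ := WellFounded.has_min wellFounded_lt {a | k ≤ (g a : ℕ)} hleft
  obtain ⟨a, ha⟩ := hright
  have hac : a < c := hg.lt_iff_lt.1 (ha.trans_le hc)
  refine absurd ⟨c, by lia, c.2, fun i j hi hj => (h i j).2 (hf _ _ ?_ ?_)⟩ hτ
  · exact not_le.1 fun h => hcmin i h hi
  · exact hc.trans (hg.monotone hj)

lemma SplitsAt.separableSeq_iff {f : Fin (k + m) → α} (hf : SplitsAt f k) :
    SeparableSeq f ↔ SeparableSeq (f ∘ Fin.castAdd m) ∧ SeparableSeq (f ∘ Fin.natAdd k) := by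
  have h2413 : ¬ SumDecomposable (![1, 3, 0, 2] : Fin 4 → Fin 4) := by
    rintro ⟨k, hk0, hk4, hk⟩
    simp only [SplitsAt] at hk
    interval_cases k <;> revert hk <;> decide
  have h3142 : ¬ SumDecomposable (![2, 0, 3, 1] : Fin 4 → Fin 4) := by
    rintro ⟨k, hk0, hk4, hk⟩
    simp only [SplitsAt] at hk
    interval_cases k <;> revert hk <;> decide
  simp only [SeparableSeq, hf.hasPattern_iff h2413, hf.hasPattern_iff h3142]
  tauto

end Splitting

section DirectSum

variable {k l m n : ℕ}

lemma splitsAt_perm_iff {σ : Equiv.Perm (Fin n)} :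
    SplitsAt σ k ↔ ∀ i : Fin n, (i : ℕ) < k → (σ i : ℕ) < k := by
  constructor
  · intro h i hi
    by_contra! hσi
    have hmaps : Set.MapsTo σ {j | k ≤ (j : ℕ)} {j | k ≤ (j : ℕ)} := fun j hj =>
      hσi.trans (Fin.le_def.1 (h i j hi hj).le)
    simpa [hi.not_ge] using Equiv.Perm.perm_symm_mapsTo_of_mapsTo σ hmaps hσi
  · intro h i j hi hj
    refine Fin.lt_def.2 ((h i hi).trans_le ?_)
    by_contra! hσj
    have hmaps : Set.MapsTo σ {j | (j : ℕ) < k} {j | (j : ℕ) < k} := h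
    simpa [hj.not_gt] using Equiv.Perm.perm_symm_mapsTo_of_mapsTo σ hmaps hσj

/-- The direct sum `σ ⊕ τ` of permutations: `σ` acts on the first `k` positions and values, `τ` on
the last `m`. -/
def directSum (σ : Equiv.Perm (Fin k)) (τ : Equiv.Perm (Fin m)) : Equiv.Perm (Fin (k + m)) :=
  finSumFinEquiv.permCongr (σ.sumCongr τ)

lemma directSum_comp_castAdd (σ : Equiv.Perm (Fin k)) (τ : Equiv.Perm (Fin m)) :
    directSum σ τ ∘ Fin.castAdd m = Fin.castAdd m ∘ σ := by
  ext i
  simp [directSum, Equiv.permCongr_apply]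

lemma directSum_comp_natAdd (σ : Equiv.Perm (Fin k)) (τ : Equiv.Perm (Fin m)) :
    directSum σ τ ∘ Fin.natAdd k = Fin.natAdd k ∘ τ := by
  ext i
  simp [directSum, Equiv.permCongr_apply]

lemma directSum_injective : Injective fun p : Equiv.Perm (Fin k) × Equiv.Perm (Fin m) =>
    directSum p.1 p.2 :=
  finSumFinEquiv.permCongr.injective.comp Equiv.Perm.sumCongrHom_injective

lemma splitsAt_directSum_iff (σ : Equiv.Perm (Fin k)) (τ : Equiv.Perm (Fin m)) (hl : l ≤ k) :
    SplitsAt (directSum σ τ) l ↔ SplitsAt σ l := by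
  have hcast (i : Fin k) : directSum σ τ (Fin.castAdd m i) = Fin.castAdd m (σ i) :=
    congrFun (directSum_comp_castAdd σ τ) i
  have hnot (i : Fin m) : ¬ k + (i : ℕ) < l := by lia
  simp only [splitsAt_perm_iff, Fin.forall_fin_add, hcast, hnot, Fin.val_castAdd, Fin.val_natAdd,
    false_imp_iff, implies_true, and_true]

lemma splitsAt_directSum (σ : Equiv.Perm (Fin k)) (τ : Equiv.Perm (Fin m)) :
    SplitsAt (directSum σ τ) k :=
  (splitsAt_directSum_iff σ τ le_rfl).2 (splitsAt_of_length_le σ le_rfl)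

lemma SplitsAt.exists_directSum {ρ : Equiv.Perm (Fin (k + m))} (hρ : SplitsAt ρ k) :
    ∃ σ τ, directSum σ τ = ρ := by
  have hmaps : Set.MapsTo (finSumFinEquiv.symm.permCongr ρ) (Set.range Sum.inl)
      (Set.range Sum.inl) := by
    rintro _ ⟨i, rfl⟩
    have hlt : (ρ (Fin.castAdd m i) : ℕ) < k := splitsAt_perm_iff.1 hρ _ i.2
    exact ⟨(ρ (Fin.castAdd m i)).castLT hlt, finSumFinEquiv.injective (by
      simp [Equiv.permCongr_apply])⟩
  obtain ⟨⟨σ, τ⟩, hστ⟩ := Equiv.Perm.mem_sumCongrHom_range_of_perm_mapsTo_inl hmaps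
  exact ⟨σ, τ, finSumFinEquiv.permCongr.eq_symm_apply.1 hστ⟩

lemma separable_directSum_iff (σ : Equiv.Perm (Fin k)) (τ : Equiv.Perm (Fin m)) :
    Separable (directSum σ τ) ↔ Separable σ ∧ Separable τ := by
  simp only [separable_iff_separableSeq, (splitsAt_directSum σ τ).separableSeq_iff,
    directSum_comp_castAdd, directSum_comp_natAdd,
    separableSeq_strictMono_comp_iff (Fin.strictMono_castAdd m),
    separableSeq_strictMono_comp_iff (Fin.strictMono_natAdd k)]

end DirectSum

section Counting

variable {k m n : ℕ}

lemma mem_SEP {σ : Equiv.Perm (Fin n)} : σ ∈ SEP n ↔ Separable σ := by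
  simp [SEP]

lemma card_SEP_of_lt_four (hn : n < 4) : #(SEP n) = n.factorial := by
  have hsep (σ : Equiv.Perm (Fin n)) (τ : Fin 4 → Fin 4) : ¬ ContainsPattern σ τ := by
    rintro ⟨g, hg, -⟩
    exact hn.not_ge (by simpa using Fintype.card_le_of_injective g hg.injective)
  rw [SEP, filter_true_of_mem fun σ _ => ⟨hsep σ _, hsep σ _⟩, card_univ, Fintype.card_perm,
    Fintype.card_fin]

lemma bplus_eq_iff {σ : Equiv.Perm (Fin n)} (hk : 0 < k) :
    Bplus σ = k ↔ SplitsAt σ k ∧ ∀ l, 0 < l → l < k → ¬ SplitsAt σ l := by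
  have hB : Bplus σ = sInf {j | 1 ≤ j ∧ SplitsAt σ j} := by simp only [Bplus, splitsAt_perm_iff]
  rw [hB]
  constructor
  · rintro rfl
    exact ⟨(Nat.sInf_mem (Nat.nonempty_of_pos_sInf hk)).2,
      fun l hl hlt h => Nat.notMem_of_lt_sInf hlt ⟨hl, h⟩⟩
  · rintro ⟨hsplit, hmin⟩
    have hleast : IsLeast {j | 1 ≤ j ∧ SplitsAt σ j} k :=
      ⟨⟨hk, hsplit⟩, fun l hl => not_lt.1 fun hlt => hmin l hl.1 hlt hl.2⟩
    exact hleast.csInf_eq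

lemma bplus_eq_length_iff {σ : Equiv.Perm (Fin n)} (hn : 0 < n) :
    Bplus σ = n ↔ ¬ SumDecomposable σ := by
  simp only [bplus_eq_iff hn, splitsAt_of_length_le (σ : Fin n → Fin n) le_rfl, true_and,
    SumDecomposable, not_exists, not_and]

lemma bplus_mem_Icc (hn : 0 < n) (σ : Equiv.Perm (Fin n)) : Bplus σ ∈ Finset.Icc 1 n := by
  have hmem : n ∈ {j | 1 ≤ j ∧ ∀ i : Fin n, (i : ℕ) < j → (σ i : ℕ) < j} :=
    ⟨hn, fun i _ => (σ i).2⟩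
  exact mem_Icc.2 ⟨(Nat.sInf_mem ⟨n, hmem⟩).1, Nat.sInf_le hmem⟩

lemma bplus_directSum_eq_iff (hk : 0 < k) (σ : Equiv.Perm (Fin k)) (τ : Equiv.Perm (Fin m)) :
    Bplus (directSum σ τ) = k ↔ Bplus σ = k := by
  rw [bplus_eq_iff hk, bplus_eq_iff hk, splitsAt_directSum_iff σ τ le_rfl]
  exact and_congr_right fun _ => forall₃_congr fun l _ hl =>
    (splitsAt_directSum_iff σ τ hl.le).not

lemma card_SEP_filter_bplus_eq (hk : 0 < k) (hn : k + m = n) :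
    #{ρ ∈ SEP n | Bplus ρ = k} = #{σ ∈ SEP k | Bplus σ = k} * #(SEP m) := by
  subst hn
  rw [← card_product, ← card_image_of_injective _ directSum_injective]
  congr 1
  ext ρ
  simp only [mem_filter, mem_image, mem_product, mem_SEP, Prod.exists]
  constructor
  · rintro ⟨hsep, hρ⟩
    obtain ⟨σ, τ, rfl⟩ := ((bplus_eq_iff hk).1 hρ).1.exists_directSum
    rw [separable_directSum_iff] at hsep
    rw [bplus_directSum_eq_iff hk] at hρ
    exact ⟨σ, τ, ⟨⟨hsep.1, hρ⟩, hsep.2⟩, rfl⟩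
  · rintro ⟨σ, τ, ⟨⟨hσ, hB⟩, hτ⟩, rfl⟩
    exact ⟨(separable_directSum_iff σ τ).2 ⟨hσ, hτ⟩, (bplus_directSum_eq_iff hk σ τ).2 hB⟩

lemma card_SEP_succ (n : ℕ) :
    #(SEP (n + 1)) = ∑ p ∈ antidiagonal n,
      #{σ ∈ SEP (p.1 + 1) | Bplus σ = p.1 + 1} * #(SEP p.2) := by
  have hfirst : (SEP (n + 1) : Set (Equiv.Perm (Fin (n + 1)))).MapsTo
      (fun ρ => (Bplus ρ - 1, n + 1 - Bplus ρ)) (antidiagonal n) := by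
    intro ρ _
    have := mem_Icc.1 (bplus_mem_Icc n.succ_pos ρ)
    simp only [mem_coe, HasAntidiagonal.mem_antidiagonal]
    lia
  rw [card_eq_sum_card_fiberwise hfirst]
  refine sum_congr rfl fun p hp => ?_
  rw [HasAntidiagonal.mem_antidiagonal] at hp
  rw [← card_SEP_filter_bplus_eq p.1.succ_pos (n := n + 1) (by lia)]
  congr 1
  refine filter_congr fun ρ _ => ?_
  have := mem_Icc.1 (bplus_mem_Icc n.succ_pos ρ)
  rw [Prod.ext_iff]
  lia

lemma coe_revPerm_mul (σ : Equiv.Perm (Fin n)) :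
    ⇑(Fin.revPerm * σ : Equiv.Perm (Fin n)) = Fin.revOrderIso ∘ toDual ∘ σ := rfl

lemma separable_revPerm_mul_iff {σ : Equiv.Perm (Fin n)} :
    Separable (Fin.revPerm * σ) ↔ Separable σ := by
  rw [separable_iff_separableSeq, coe_revPerm_mul,
    separableSeq_strictMono_comp_iff Fin.revOrderIso.strictMono, separableSeq_toDual_comp_iff,
    separable_iff_separableSeq]

lemma Separable.sumDecomposable_revPerm_mul_iff (hn : 2 ≤ n) {σ : Equiv.Perm (Fin n)}
    (hσ : Separable σ) :
    SumDecomposable (Fin.revPerm * σ : Equiv.Perm (Fin n)) ↔ ¬ SumDecomposable σ := by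
  rw [coe_revPerm_mul, sumDecomposable_strictMono_comp_iff Fin.revOrderIso.strictMono]
  exact ⟨fun hskew hsum => hsum.not_toDual_comp hskew,
    (((separable_iff_separableSeq σ).1 hσ).sumDecomposable_or hn σ.injective).resolve_left⟩

lemma two_mul_card_SEP_filter_bplus_eq_length (hn : 2 ≤ n) :
    2 * #{σ ∈ SEP n | Bplus σ = n} = #(SEP n) := by
  have hcompl : #{σ ∈ SEP n | Bplus σ = n} = #{σ ∈ SEP n | ¬ Bplus σ = n} := by
    refine card_equiv (Equiv.mulLeft Fin.revPerm) fun σ => ?_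
    simp only [mem_filter, mem_SEP, Equiv.coe_mulLeft, separable_revPerm_mul_iff,
      bplus_eq_length_iff (zero_lt_two.trans_le hn), not_not]
    exact and_congr_right fun hσ => (hσ.sumDecomposable_revPerm_mul_iff hn).symm
  rw [← card_filter_add_card_filter_not (s := SEP n) (fun σ => Bplus σ = n), ← hcompl, two_mul]

lemma card_SEP_one_filter_bplus_eq_one : #{σ ∈ SEP 1 | Bplus σ = 1} = 1 := by
  rw [filter_true_of_mem, card_SEP_of_lt_four (by lia), Nat.factorial_one]
  exact fun σ _ => by simpa using bplus_mem_Icc one_pos σ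

lemma two_mul_sum_indecomposable_mul_card_SEP (n : ℕ) :
    2 * ∑ p ∈ antidiagonal n, #{σ ∈ SEP (p.1 + 1) | Bplus σ = p.1 + 1} * #(SEP (p.2 + 1)) =
      #(SEP (n + 1)) + ∑ p ∈ antidiagonal n, #(SEP (p.1 + 1)) * #(SEP (p.2 + 1)) := by
  have hone : #(SEP 1) = 1 := card_SEP_of_lt_four (by lia)
  have hindec : #{σ ∈ SEP (0 + 1) | Bplus σ = 0 + 1} = 1 := card_SEP_one_filter_bplus_eq_one
  cases n with
  | zero => simp [card_SEP_one_filter_bplus_eq_one, hone]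
  | succ n =>
    simp only [Finset.Nat.sum_antidiagonal_succ, hindec, hone, mul_add, mul_sum, ← mul_assoc,
      zero_add, two_mul_card_SEP_filter_bplus_eq_length (Nat.le_add_left 2 _)]
    ring

lemma card_SEP_succ_succ (n : ℕ) :
    #(SEP (n + 2)) =
      #(SEP (n + 1)) + ∑ p ∈ antidiagonal n, #(SEP (p.1 + 1)) * #(SEP (p.2 + 1)) := by
  have hrec := card_SEP_succ (n + 1)
  rw [Finset.Nat.sum_antidiagonal_succ', card_SEP_of_lt_four (n := 0) (by lia)] at hrec
  have hhalf := two_mul_card_SEP_filter_bplus_eq_length (n := n + 2) (by lia)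
  have hsum := two_mul_sum_indecomposable_mul_card_SEP n
  simp only [Nat.factorial_zero, mul_one] at hrec
  lia

lemma largeSchroder_succ_eq_sum_antidiagonal (n : ℕ) : (n + 1).largeSchroder =
    n.largeSchroder + ∑ p ∈ antidiagonal n, p.1.largeSchroder * p.2.largeSchroder := by
  rw [Nat.largeSchroder_succ, Finset.Nat.sum_antidiagonal_eq_sum_range_succ_mk,
    ← Finset.Iio_add_one_eq_Iic, Nat.Iio_eq_range, Nat.succ_eq_add_one]

theorem card_SEP_succ_eq_largeSchroder (n : ℕ) : #(SEP (n + 1)) = n.largeSchroder := by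
  induction n using Nat.strong_induction_on with
  | _ n ih =>
    cases n with
    | zero => simp [card_SEP_of_lt_four]
    | succ n =>
      rw [card_SEP_succ_succ, largeSchroder_succ_eq_sum_antidiagonal, ih n n.lt_succ_self]
      congr 1
      refine sum_congr rfl fun p hp => ?_
      rw [ih p.1 (Nat.lt_succ_of_le (HasAntidiagonal.antidiagonal.fst_le hp)),
        ih p.2 (Nat.lt_succ_of_le (HasAntidiagonal.antidiagonal.snd_le hp))]

end Counting

section GeneratingFunction

lemma largeSchroder_succ_mul_pow {R : Type*} [CommSemiring R] (t : R) (n : ℕ) :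
    ((n + 1).largeSchroder : R) * t ^ (n + 1 + 1) = t * (n.largeSchroder * t ^ (n + 1)) +
      ∑ p ∈ antidiagonal n,
        (p.1.largeSchroder * t ^ (p.1 + 1)) * (p.2.largeSchroder * t ^ (p.2 + 1)) := by
  rw [largeSchroder_succ_eq_sum_antidiagonal, Nat.cast_add, Nat.cast_sum, add_mul, sum_mul]
  congr 1
  · ring
  · refine sum_congr rfl fun p hp => ?_
    rw [← HasAntidiagonal.mem_antidiagonal.1 hp]
    push_cast
    ring

lemma sum_range_sum_antidiagonal_mul_le_sq {R : Type*} [CommSemiring R] [PartialOrder R]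
    [IsOrderedRing R] {g : ℕ → R} (hg : ∀ n, 0 ≤ g n) (N : ℕ) :
    ∑ n ∈ range N, ∑ p ∈ antidiagonal n, g p.1 * g p.2 ≤ (∑ n ∈ range N, g n) ^ 2 := by
  simp only [Finset.Nat.sum_antidiagonal_eq_sum_range_succ fun i j => g i * g j]
  rw [sum_range_diag_flip N fun i j => g i * g j, sq, sum_mul_sum]
  exact sum_le_sum fun i _ => sum_le_sum_of_subset_of_nonneg (range_subset_range.2 (N.sub_le i))
    fun j _ _ => mul_nonneg (hg i) (hg j)

lemma sum_range_largeSchroder_le {R : Type*} [CommSemiring R] [PartialOrder R] [IsOrderedRing R]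
    {r x : R} (hr : 0 ≤ r) (hx : 0 ≤ x) (hrx : r + r * x + x ^ 2 ≤ x) (N : ℕ) :
    ∑ n ∈ range N, (n.largeSchroder : R) * r ^ (n + 1) ≤ x := by
  set g : ℕ → R := fun n => n.largeSchroder * r ^ (n + 1) with hg
  have hg0 (n : ℕ) : 0 ≤ g n := mul_nonneg (Nat.cast_nonneg _) (pow_nonneg hr _)
  induction N with
  | zero => simpa
  | succ N ih =>
    calc ∑ n ∈ range (N + 1), g n
        = r + r * ∑ n ∈ range N, g n + ∑ n ∈ range N, ∑ p ∈ antidiagonal n, g p.1 * g p.2 := by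
          rw [sum_range_succ', sum_congr rfl fun n _ => largeSchroder_succ_mul_pow r n,
            sum_add_distrib, ← mul_sum]
          simp only [hg, Nat.largeSchroder_zero, Nat.cast_one]
          ring
      _ ≤ r + r * x + x ^ 2 := by
          gcongr
          exact (sum_range_sum_antidiagonal_mul_le_sq hg0 N).trans
            (pow_le_pow_left₀ (sum_nonneg fun n _ => hg0 n) ih 2)
      _ ≤ x := hrx

/-- The bound is the vertex of the parabola `x ↦ r + r * x + x ^ 2 - x`, which takes a nonpositive
value there as long as the discriminant `r ^ 2 - 6 * r + 1` is nonnegative. -/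
lemma sum_range_largeSchroder_le_vertex {r : ℝ} (hr : 0 ≤ r) (hr' : r ≤ 3 - 2 * √2) (N : ℕ) :
    ∑ n ∈ range N, (n.largeSchroder : ℝ) * r ^ (n + 1) ≤ (1 - r) / 2 := by
  have hsqrt : √2 ^ 2 = 2 := Real.sq_sqrt zero_le_two
  have hsqrt_ge : 1 ≤ √2 := Real.one_le_sqrt.2 one_le_two
  have hfactor : r ^ 2 - 6 * r + 1 = (3 - 2 * √2 - r) * (3 + 2 * √2 - r) := by
    linear_combination 4 * hsqrt
  have hdiscrim : 0 ≤ r ^ 2 - 6 * r + 1 :=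
    hfactor ▸ mul_nonneg (by linarith) (by linarith)
  exact sum_range_largeSchroder_le hr (by linarith) (by linarith) N

lemma sum_range_norm_largeSchroder_le {R : Type*} [NormedCommRing R] [NormOneClass R] {t : R}
    (ht : ‖t‖ ≤ 3 - 2 * √2) (N : ℕ) :
    ∑ n ∈ range N, ‖(n.largeSchroder : R) * t ^ (n + 1)‖ ≤ (1 - ‖t‖) / 2 := by
  refine (sum_le_sum fun n _ => ?_).trans (sum_range_largeSchroder_le_vertex (norm_nonneg t) ht N)
  exact (norm_mul_le _ _).trans (mul_le_mul ((Nat.norm_cast_le _).trans (by simp))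
    (norm_pow_le t _) (norm_nonneg _) (Nat.cast_nonneg _))

lemma summable_norm_largeSchroder {R : Type*} [NormedCommRing R] [NormOneClass R] {t : R}
    (ht : ‖t‖ ≤ 3 - 2 * √2) : Summable fun n : ℕ => ‖(n.largeSchroder : R) * t ^ (n + 1)‖ :=
  summable_of_sum_range_le (fun _ => norm_nonneg _) (sum_range_norm_largeSchroder_le ht)

lemma tsum_largeSchroder_eq {R : Type*} [NormedCommRing R] [CompleteSpace R] {t : R}
    (h : Summable fun n : ℕ => ‖(n.largeSchroder : R) * t ^ (n + 1)‖) :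
    ∑' n : ℕ, (n.largeSchroder : R) * t ^ (n + 1) =
      t + t * ∑' n : ℕ, (n.largeSchroder : R) * t ^ (n + 1) +
        (∑' n : ℕ, (n.largeSchroder : R) * t ^ (n + 1)) ^ 2 := by
  rw [sq, tsum_mul_tsum_eq_tsum_sum_antidiagonal_of_summable_norm h h, ← h.of_norm.tsum_mul_left t,
    add_assoc, ← (h.of_norm.mul_left t).tsum_add
      (summable_norm_sum_mul_antidiagonal_of_summable_norm h h).of_norm,
    h.of_norm.tsum_eq_zero_add, tsum_congr (largeSchroder_succ_mul_pow t)]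
  simp

theorem hasSum_largeSchroder {t : ℝ} (ht : |t| ≤ 3 - 2 * √2) :
    HasSum (fun n : ℕ => (n.largeSchroder : ℝ) * t ^ (n + 1))
      ((1 - t - √(t ^ 2 - 6 * t + 1)) / 2) := by
  have hsummable := summable_norm_largeSchroder (t := t) ht
  have hquad := tsum_largeSchroder_eq hsummable
  have hle : ∑' n : ℕ, (n.largeSchroder : ℝ) * t ^ (n + 1) ≤ (1 - |t|) / 2 :=
    (Real.le_norm_self _).trans <| (norm_tsum_le_tsum_norm hsummable).trans <|
      hsummable.tsum_le_of_sum_range_le (sum_range_norm_largeSchroder_le ht)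
  have hhasSum := hsummable.of_norm.hasSum
  set s := ∑' n : ℕ, (n.largeSchroder : ℝ) * t ^ (n + 1)
  have hsq : t ^ 2 - 6 * t + 1 = (1 - t - 2 * s) ^ 2 := by linear_combination 4 * hquad
  have hroot : (1 - t - √(t ^ 2 - 6 * t + 1)) / 2 = s := by
    rw [hsq, Real.sqrt_sq (by linarith [le_abs_self t])]
    ring
  rwa [hroot]

end GeneratingFunction

theorem sep_genfun_general (t : ℝ) (ht : |t| ≤ 3 - 2 * √2) :
    HasSum (fun n : ℕ => ((SEP (n + 1)).card : ℝ) * t ^ (n + 1))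
      ((1 - t - √(t ^ 2 - 6 * t + 1)) / 2) := by
  simpa only [card_SEP_succ_eq_largeSchroder] using hasSum_largeSchroder ht

/-- The generating function of the numbers of separable permutations:
`∑_{n≥1} sₙ tⁿ = (1 - t - √(t² - 6t + 1))/2` for `|t| < 3 - 2√2`. -/
theorem sep_genfun (t : ℝ) (ht : |t| < 3 - 2 * Real.sqrt 2) :
    HasSum (fun n : ℕ => ((SEP (n + 1)).card : ℝ) * t ^ (n + 1))
      ((1 - t - Real.sqrt (t ^ 2 - 6 * t + 1)) / 2) :=
  sep_genfun_general t ht.le
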